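/- Let 0 < s < 1 and let ρ and δρ be continuous functions defined on a neighborhood of ∂Ω_s. Let σ : ℝ → ℝ be differentiable at 0 and let u : ℝ × ℝ² → ℝ be smooth on ℝ × V for some open set V containing the closure of Ω_s. Assume that for every ε ∈ ℝ the pair (σ(ε), u(ε, ·)) satisfies the weighted Steklov problem in weak form with density ρ_ε = ρ + ε·δρ and that ∫_{∂Ω_s} ρ_ε·u(ε,·)² = 1 for every ε. Define L(ε) = ∫_{∂Ω_s} ρ_ε and the length-normalized eigenvalue σ̃(ε) = σ(ε)·L(ε). Then σ̃ is differentiable at 0 with σ̃'(0) = σ(0)·∫_{∂Ω_s} (1 − L(0)·u(0,·)²)·δρ. -/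

import Mathlib

/-!
The formula follows from the symmetry of the Dirichlet form. For each `ε`, cut `u(ε,·)` off to a
function smooth on the whole plane (`exists_smooth_extension`). Testing the problem at `ε` against
`u(0,·)` and the problem at `0` against `u(ε,·)` gives the same Dirichlet integral, hence
`σ(ε) (A(ε) + ε B(ε)) = σ(0) A(ε)`, where `A(ε) = ∫_{∂Ω_s} ρ u(ε,·) u(0,·)` and
`B(ε) = ∫_{∂Ω_s} δρ u(ε,·) u(0,·)` (`steklov_cross_identity`).

Thus `(σ(ε) - σ(0)) A(ε) = -ε σ(ε) B(ε)`. Since `A` and `B` are continuous and `A(0) = 1` by the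
normalization, `σ'(0) = -σ(0) B(0) = -σ(0) ∫_{∂Ω_s} δρ u(0,·)²`. The product rule, with `L` affine
in `ε`, gives the claim. The argument uses only continuity of `u` in `ε`, never its
`ε`-derivative.
-/


open MeasureTheory

/-- Partial derivative of `u : ℝ × ℝ → ℝ` in the first coordinate. -/
noncomputable def pdx (u : ℝ × ℝ → ℝ) (p : ℝ × ℝ) : ℝ :=
  deriv (fun t => u (t, p.2)) p.1

/-- Partial derivative of `u : ℝ × ℝ → ℝ` in the second coordinate. -/
noncomputable def pdy (u : ℝ × ℝ → ℝ) (p : ℝ × ℝ) : ℝ :=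
  deriv (fun t => u (p.1, t)) p.2

/-- The open annulus `Ω_s = {x ∈ ℝ² : s < |x| < 1}`. -/
noncomputable def ann (s : ℝ) : Set (ℝ × ℝ) :=
  {p | s < Real.sqrt (p.1 ^ 2 + p.2 ^ 2) ∧ Real.sqrt (p.1 ^ 2 + p.2 ^ 2) < 1}

/-- The boundary `∂Ω_s`, the union of the two circles `|x| = s` and `|x| = 1`. -/
noncomputable def annBdry (s : ℝ) : Set (ℝ × ℝ) :=
  {p | Real.sqrt (p.1 ^ 2 + p.2 ^ 2) = s ∨ Real.sqrt (p.1 ^ 2 + p.2 ^ 2) = 1}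

/-- The boundary integral `∫_{∂Ω_s} g` with respect to arc length on the two
boundary circles. -/
noncomputable def bInt (s : ℝ) (g : ℝ × ℝ → ℝ) : ℝ :=
  (∫ θ in (0 : ℝ)..(2 * Real.pi), g (Real.cos θ, Real.sin θ)) +
    s * ∫ θ in (0 : ℝ)..(2 * Real.pi), g (s * Real.cos θ, s * Real.sin θ)

/-- `g` restricts to a continuous function of the angle on each of the two boundary circles. -/
def BdryCont (s : ℝ) (g : ℝ × ℝ → ℝ) : Prop :=
  Continuous (fun θ : ℝ => g (Real.cos θ, Real.sin θ)) ∧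
    Continuous (fun θ : ℝ => g (s * Real.cos θ, s * Real.sin θ))

lemma BdryCont.mul {s : ℝ} {f g : ℝ × ℝ → ℝ} (hf : BdryCont s f) (hg : BdryCont s g) :
    BdryCont s (fun q => f q * g q) :=
  ⟨hf.1.mul hg.1, hf.2.mul hg.2⟩

lemma bInt_add_mul {s : ℝ} {f g : ℝ × ℝ → ℝ} (hf : BdryCont s f) (hg : BdryCont s g) (c : ℝ) :
    bInt s (fun q => f q + c * g q) = bInt s f + c * bInt s g := by
  unfold bInt
  rw [intervalIntegral.integral_add (hf.1.intervalIntegrable _ _)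
      ((hg.1.const_mul c).intervalIntegrable _ _),
    intervalIntegral.integral_add (hf.2.intervalIntegrable _ _)
      ((hg.2.const_mul c).intervalIntegrable _ _),
    intervalIntegral.integral_const_mul, intervalIntegral.integral_const_mul]
  ring

lemma sqrt_polar {r : ℝ} (hr : 0 ≤ r) (θ : ℝ) :
    Real.sqrt ((r * Real.cos θ) ^ 2 + (r * Real.sin θ) ^ 2) = r := by
  have h : (r * Real.cos θ) ^ 2 + (r * Real.sin θ) ^ 2 = r ^ 2 := by
    linear_combination r ^ 2 * Real.cos_sq_add_sin_sq θ
  rw [h, Real.sqrt_sq hr]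

lemma isOpen_ann (s : ℝ) : IsOpen (ann s) := by
  have h : Continuous fun p : ℝ × ℝ => Real.sqrt (p.1 ^ 2 + p.2 ^ 2) := by fun_prop
  exact (isOpen_lt continuous_const h).inter (isOpen_lt h continuous_const)

/-- Each closed radial segment `s ≤ r ≤ 1` lies in the closure of the annulus; in particular the
two boundary circles do. -/
lemma polar_mem_closure_ann {s : ℝ} (hs : 0 < s) (hs1 : s < 1) (θ : ℝ) {r : ℝ}
    (hr : r ∈ Set.Icc s 1) : (r * Real.cos θ, r * Real.sin θ) ∈ closure (ann s) := by
  have hc : Continuous fun r : ℝ => (r * Real.cos θ, r * Real.sin θ) := by fun_prop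
  have hmaps : Set.MapsTo (fun r : ℝ => (r * Real.cos θ, r * Real.sin θ))
      (Set.Ioo s 1) (ann s) := by
    intro t ht
    have ht0 : 0 ≤ t := (hs.trans ht.1).le
    simpa [ann, sqrt_polar ht0] using ht
  rw [← closure_Ioo hs1.ne] at hr
  exact hmaps.closure hc hr

lemma bdryCont_of_continuousOn {s : ℝ} (hs : 0 < s) {g : ℝ × ℝ → ℝ} {W : Set (ℝ × ℝ)}
    (hWb : annBdry s ⊆ W) (hg : ContinuousOn g W) : BdryCont s g := by
  constructor
  · refine hg.comp_continuous (by fun_prop) fun θ => hWb (Or.inr ?_)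
    simp
  · exact hg.comp_continuous (by fun_prop) fun θ => hWb (Or.inl (sqrt_polar hs.le θ))

/-- A function smooth near the closed annulus agrees there with a function smooth on the plane,
so it may be used as a test function. -/
lemma exists_smooth_extension {s : ℝ} {f : ℝ × ℝ → ℝ} {V : Set (ℝ × ℝ)} (hV : IsOpen V)
    (hVΩ : closure (ann s) ⊆ V) (hf : ContDiffOn ℝ (⊤ : ℕ∞) f V) :
    ∃ v : ℝ × ℝ → ℝ, ContDiff ℝ (⊤ : ℕ∞) v ∧ Set.EqOn v f (closure (ann s)) := by
  obtain ⟨χ, h0, h1, -⟩ := exists_contMDiffMap_zero_one_nhds_of_isClosed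
    (modelWithCornersSelf ℝ (ℝ × ℝ)) (n := (⊤ : ℕ∞)) hV.isClosed_compl
    (isClosed_closure (s := ann s)) (Set.disjoint_compl_left_iff_subset.mpr hVΩ)
  have hχ : ContDiff ℝ (⊤ : ℕ∞) χ := χ.contMDiff.contDiff
  refine ⟨fun q => χ q * f q, ?_, ?_⟩
  · rw [contDiff_iff_contDiffAt]
    intro q
    by_cases hq : q ∈ V
    · exact hχ.contDiffAt.mul (hf.contDiffAt (hV.mem_nhds hq))
    · have hz : ∀ᶠ x in nhds q, χ x = 0 := h0.filter_mono (nhds_le_nhdsSet hq)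
      refine (contDiffAt_const (c := (0 : ℝ))).congr_of_eventuallyEq ?_
      filter_upwards [hz] with x hx
      simp [hx]
  · intro q hq
    have : χ q = 1 := (h1.filter_mono (nhds_le_nhdsSet hq)).self_of_nhds
    simp [this]

lemma pdx_congr {f g : ℝ × ℝ → ℝ} {q : ℝ × ℝ} (h : f =ᶠ[nhds q] g) : pdx f q = pdx g q := by
  have hc : Filter.Tendsto (fun t : ℝ => (t, q.2)) (nhds q.1) (nhds q) := by
    have : Continuous fun t : ℝ => (t, q.2) := by fun_prop
    exact this.tendsto q.1
  exact Filter.EventuallyEq.deriv_eq (hc.eventually h)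

lemma pdy_congr {f g : ℝ × ℝ → ℝ} {q : ℝ × ℝ} (h : f =ᶠ[nhds q] g) : pdy f q = pdy g q := by
  have hc : Filter.Tendsto (fun t : ℝ => (q.1, t)) (nhds q.2) (nhds q) := by
    have : Continuous fun t : ℝ => (q.1, t) := by fun_prop
    exact this.tendsto q.2
  exact Filter.EventuallyEq.deriv_eq (hc.eventually h)

lemma bInt_congr {s : ℝ} (hs : 0 < s) (hs1 : s < 1) {f g : ℝ × ℝ → ℝ}
    (h : Set.EqOn f g (closure (ann s))) : bInt s f = bInt s g := by
  have h1 : ∀ θ : ℝ, f (Real.cos θ, Real.sin θ) = g (Real.cos θ, Real.sin θ) := fun θ =>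
    h (by simpa using polar_mem_closure_ann hs hs1 θ (r := 1) ⟨hs1.le, le_rfl⟩)
  have h2 : ∀ θ : ℝ, f (s * Real.cos θ, s * Real.sin θ) = g (s * Real.cos θ, s * Real.sin θ) :=
    fun θ => h (polar_mem_closure_ann hs hs1 θ ⟨le_rfl, hs1.le⟩)
  simp only [bInt, h1, h2]

/-- A weak solution may be tested against any function smooth only near the closed annulus. -/
lemma weak_form_local {s : ℝ} (hs : 0 < s) (hs1 : s < 1) {ρ u w : ℝ × ℝ → ℝ} {σ : ℝ}
    {V : Set (ℝ × ℝ)} (hV : IsOpen V) (hVΩ : closure (ann s) ⊆ V)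
    (hw : ContDiffOn ℝ (⊤ : ℕ∞) w V)
    (hweak : ∀ v : ℝ × ℝ → ℝ, ContDiff ℝ (⊤ : ℕ∞) v →
      (∫ q in ann s, (pdx u q * pdx v q + pdy u q * pdy v q)) =
        σ * bInt s (fun q => ρ q * u q * v q)) :
    (∫ q in ann s, (pdx u q * pdx w q + pdy u q * pdy w q)) =
      σ * bInt s (fun q => ρ q * u q * w q) := by
  obtain ⟨v, hv, hvw⟩ := exists_smooth_extension hV hVΩ hw
  have hI : (∫ q in ann s, (pdx u q * pdx w q + pdy u q * pdy w q)) =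
      ∫ q in ann s, (pdx u q * pdx v q + pdy u q * pdy v q) := by
    refine setIntegral_congr_fun (isOpen_ann s).measurableSet fun q hq => ?_
    have he : w =ᶠ[nhds q] v := by
      filter_upwards [(isOpen_ann s).mem_nhds hq] with x hx
      exact (hvw (subset_closure hx)).symm
    simp only [pdx_congr he, pdy_congr he]
  rw [hI, hweak v hv]
  congr 1
  exact bInt_congr hs hs1 fun q hq => by simp only [hvw hq]

/-- Testing each of two weak solutions against the other, by symmetry of the Dirichlet form. -/
lemma steklov_cross_identity {s : ℝ} (hs : 0 < s) (hs1 : s < 1) {ρ₁ ρ₂ u₁ u₂ : ℝ × ℝ → ℝ}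
    {σ₁ σ₂ : ℝ} {V : Set (ℝ × ℝ)} (hV : IsOpen V) (hVΩ : closure (ann s) ⊆ V)
    (hu₁ : ContDiffOn ℝ (⊤ : ℕ∞) u₁ V) (hu₂ : ContDiffOn ℝ (⊤ : ℕ∞) u₂ V)
    (hweak₁ : ∀ v : ℝ × ℝ → ℝ, ContDiff ℝ (⊤ : ℕ∞) v →
      (∫ q in ann s, (pdx u₁ q * pdx v q + pdy u₁ q * pdy v q)) =
        σ₁ * bInt s (fun q => ρ₁ q * u₁ q * v q))
    (hweak₂ : ∀ v : ℝ × ℝ → ℝ, ContDiff ℝ (⊤ : ℕ∞) v →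
      (∫ q in ann s, (pdx u₂ q * pdx v q + pdy u₂ q * pdy v q)) =
        σ₂ * bInt s (fun q => ρ₂ q * u₂ q * v q)) :
    σ₁ * bInt s (fun q => ρ₁ q * (u₁ q * u₂ q)) = σ₂ * bInt s (fun q => ρ₂ q * (u₁ q * u₂ q)) := by
  have h₁ := weak_form_local hs hs1 hV hVΩ hu₂ hweak₁
  have h₂ := weak_form_local hs hs1 hV hVΩ hu₁ hweak₂
  have hsymm : (∫ q in ann s, (pdx u₁ q * pdx u₂ q + pdy u₁ q * pdy u₂ q)) =
      ∫ q in ann s, (pdx u₂ q * pdx u₁ q + pdy u₂ q * pdy u₁ q) := by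
    simp only [mul_comm]
  rw [h₁, h₂] at hsymm
  simpa only [mul_assoc, mul_comm (u₂ _) (u₁ _)] using hsymm

/-- Boundary integrals against a family that is jointly continuous near the closed annulus depend
continuously on the parameter. -/
lemma continuous_bInt_family {s : ℝ} (hs : 0 < s) (hs1 : s < 1) {g : ℝ × ℝ → ℝ}
    (hg : BdryCont s g) {u : ℝ → ℝ × ℝ → ℝ} {V : Set (ℝ × ℝ)} (hVΩ : closure (ann s) ⊆ V)
    (hu : ContinuousOn (fun q : ℝ × (ℝ × ℝ) => u q.1 q.2) (Set.univ ×ˢ V)) :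
    Continuous fun ε => bInt s (fun q => g q * (u ε q * u 0 q)) := by
  have key : ∀ r ∈ Set.Icc s 1, ∀ e : ℝ × ℝ → ℝ, Continuous e →
      Continuous fun p : ℝ × ℝ => u (e p) (r * Real.cos p.2, r * Real.sin p.2) := by
    intro r hr e he
    exact hu.comp_continuous (f := fun p : ℝ × ℝ => (e p, (r * Real.cos p.2, r * Real.sin p.2)))
      (by fun_prop) fun p => ⟨Set.mem_univ _, hVΩ (polar_mem_closure_ann hs hs1 p.2 hr)⟩
  have hr1 : (1 : ℝ) ∈ Set.Icc s 1 := ⟨hs1.le, le_rfl⟩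
  have hrs : s ∈ Set.Icc s 1 := ⟨le_rfl, hs1.le⟩
  unfold bInt
  refine Continuous.add ?_ (Continuous.const_mul ?_ s)
  · refine intervalIntegral.continuous_parametric_intervalIntegral_of_continuous' ?_ _ _
    have a := key 1 hr1 Prod.fst continuous_fst
    have b := key 1 hr1 (fun _ => 0) continuous_const
    simp only [one_mul] at a b
    exact (hg.1.comp continuous_snd).mul (a.mul b)
  · refine intervalIntegral.continuous_parametric_intervalIntegral_of_continuous' ?_ _ _
    exact (hg.2.comp continuous_snd).mul
      ((key s hrs Prod.fst continuous_fst).mul (key s hrs (fun _ => 0) continuous_const))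

/-- The differentiation step, isolated from the boundary value problem: the cross identity
determines `σ'(0)` as soon as `σ`, `A` and `B` are continuous at `0`. -/
lemma hasDerivAt_of_cross_identity {σ A B : ℝ → ℝ} (hσ : ContinuousAt σ 0)
    (hA : ContinuousAt A 0) (hB : ContinuousAt B 0) (hA0 : A 0 = 1)
    (h : ∀ ε, σ ε * (A ε + ε * B ε) = σ 0 * A ε) : HasDerivAt σ (-(σ 0 * B 0)) 0 := by
  rw [hasDerivAt_iff_tendsto_slope_zero]
  have hne : ∀ᶠ ε in nhds (0 : ℝ), A ε ≠ 0 := hA.eventually_ne (by simp [hA0])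
  have hlim : Filter.Tendsto (fun ε => -(σ ε * B ε) / A ε) (nhds 0) (nhds (-(σ 0 * B 0))) := by
    have := (hσ.mul hB).neg.div hA (by simp [hA0])
    simp only [ContinuousAt, Pi.div_apply, Pi.neg_apply, Pi.mul_apply, hA0, div_one] at this
    exact this
  refine (hlim.mono_left nhdsWithin_le_nhds).congr' ?_
  filter_upwards [hne.filter_mono nhdsWithin_le_nhds, self_mem_nhdsWithin] with ε hε hε0
  have hε0' : ε ≠ 0 := hε0
  rw [zero_add, smul_eq_mul]
  field_simp
  linear_combination -h ε

/-- if `(σ(ε), u(ε,·))` is a smooth normalized family of weak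
solutions of the weighted Steklov problem on the annulus `Ω_s` with density
`ρ_ε = ρ + ε δρ`, then the length-normalized eigenvalue
`σ̃(ε) = σ(ε) L(ε)`, with `L(ε) = ∫_{∂Ω_s} ρ_ε`, is differentiable at `0` with
`σ̃'(0) = σ(0) ∫_{∂Ω_s} (1 − L(0) u(0,·)²) δρ`. -/
theorem normalized_steklov_eigenvalue_density_derivative
    (s : ℝ) (hs : 0 < s) (hs1 : s < 1)
    (ρ δρ : ℝ × ℝ → ℝ) (W : Set (ℝ × ℝ)) (hW : IsOpen W) (hWb : annBdry s ⊆ W)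
    (hρ : ContinuousOn ρ W) (hδρ : ContinuousOn δρ W)
    (σ : ℝ → ℝ) (hσ : DifferentiableAt ℝ σ 0)
    (u : ℝ → ℝ × ℝ → ℝ) (V : Set (ℝ × ℝ)) (hV : IsOpen V)
    (hVΩ : closure (ann s) ⊆ V)
    (hu : ContDiffOn ℝ (⊤ : ℕ∞) (fun q : ℝ × (ℝ × ℝ) => u q.1 q.2) (Set.univ ×ˢ V))
    (hweak : ∀ ε : ℝ, ∀ v : ℝ × ℝ → ℝ, ContDiff ℝ (⊤ : ℕ∞) v →
      (∫ q in ann s, (pdx (u ε) q * pdx v q + pdy (u ε) q * pdy v q)) =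
        σ ε * bInt s (fun q => (ρ q + ε * δρ q) * u ε q * v q))
    (hnorm : ∀ ε : ℝ, bInt s (fun q => (ρ q + ε * δρ q) * (u ε q) ^ 2) = 1)
    (L : ℝ → ℝ) (hL : ∀ ε : ℝ, L ε = bInt s (fun q => ρ q + ε * δρ q)) :
    HasDerivAt (fun ε => σ ε * L ε)
      (σ 0 * bInt s (fun q => (1 - L 0 * (u 0 q) ^ 2) * δρ q)) 0 := by
  have hbρ : BdryCont s ρ := bdryCont_of_continuousOn hs hWb hρ
  have hbδ : BdryCont s δρ := bdryCont_of_continuousOn hs hWb hδρ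
  have huε : ∀ ε, ContDiffOn ℝ (⊤ : ℕ∞) (u ε) V := fun ε =>
    hu.comp (f := fun q : ℝ × ℝ => (ε, q)) (by fun_prop) fun q hq => ⟨Set.mem_univ _, hq⟩
  have hbu : ∀ ε, BdryCont s (u ε) := fun ε => by
    have hc := (huε ε).continuousOn
    constructor
    · refine hc.comp_continuous (by fun_prop) fun θ => hVΩ ?_
      simpa using polar_mem_closure_ann hs hs1 θ (r := 1) ⟨hs1.le, le_rfl⟩
    · exact hc.comp_continuous (by fun_prop) fun θ =>
        hVΩ (polar_mem_closure_ann hs hs1 θ ⟨le_rfl, hs1.le⟩)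
  have hbw : ∀ ε, BdryCont s (fun q => u ε q * u 0 q) := fun ε => (hbu ε).mul (hbu 0)
  have hLaff : ∀ ε, L ε = bInt s ρ + ε * bInt s δρ := fun ε => by
    rw [hL, bInt_add_mul hbρ hbδ]
  have hσ' : HasDerivAt σ (-(σ 0 * bInt s (fun q => δρ q * (u 0 q * u 0 q)))) 0 := by
    refine hasDerivAt_of_cross_identity (A := fun ε => bInt s (fun q => ρ q * (u ε q * u 0 q)))
      (B := fun ε => bInt s (fun q => δρ q * (u ε q * u 0 q))) hσ.continuousAt
      (continuous_bInt_family hs hs1 hbρ hVΩ hu.continuousOn).continuousAt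
      (continuous_bInt_family hs hs1 hbδ hVΩ hu.continuousOn).continuousAt ?_ fun ε => ?_
    · simpa [pow_two] using hnorm 0
    · have h := steklov_cross_identity hs hs1 hV hVΩ (huε ε) (huε 0) (hweak ε) (hweak 0)
      rw [← bInt_add_mul (hbρ.mul (hbw ε)) (hbδ.mul (hbw ε))]
      simpa [add_mul, mul_assoc] using h
  have hL' : HasDerivAt L (bInt s δρ) 0 := by
    rw [funext hLaff]
    simpa using ((hasDerivAt_id (0 : ℝ)).mul_const (bInt s δρ)).const_add (bInt s ρ)
  have hrhs : bInt s (fun q => (1 - L 0 * (u 0 q) ^ 2) * δρ q) =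
      bInt s δρ + -L 0 * bInt s (fun q => δρ q * (u 0 q * u 0 q)) := by
    rw [← bInt_add_mul hbδ (hbδ.mul (hbw 0))]
    congr 1
    funext q
    ring
  refine (hσ'.mul hL').congr_deriv ?_
  rw [hrhs]
  ring
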